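/- Finite-horizon weak submartingale optimality principle (main conclusion of Lemma 2.1): Suppose there exist α* ∈ A and, for every α ∈ A and every i ∈ {1,…,n}, real-valued integrable random variables (W_t^{α,i})_{t∈[0,T]}, a jointly measurable running-cost process F^{α,i} : [0,T] × Ω → ℝ with ∫_0^T e^{−ρu} E[|F_u^{α,i}|] du < ∞, and an integrable terminal-cost random variable G^{α,i}, such that, writing S_t^{α,i} := e^{−ρt} W_t^{α,i} + ∫_0^t e^{−ρu} F_u^{α,i} du and J^i(α) := E[∫_0^T e^{−ρu} F_u^{α,i} du + e^{−ρT} G^{α,i}], the following hold: (i) for every α, α′ ∈ A that agree in all coordinates except possibly the i-th, E[W_0^{α,i}] = E[W_0^{α′,i}]; (ii) for every α ∈ A, E[W_T^{α,i}] = E[G^{α,i}]; (iii) for every α ∈ A, the map t ↦ E[S_t^{α,i}] is well defined and nondecreasing on [0,T]; (iv) the map t ↦ E[S_t^{α*,i}] is constant on [0,T]. Then α* is a Nash equilibrium, i.e. for every i ∈ {1,…,n} and every α_i ∈ A_i one has J^i(α*) ≤ J^i((α_i, α*^{−i})), and moreover J^i(α*) = E[W_0^{α*,i}] for every i. -/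

import Mathlib

open MeasureTheory Set

/-!
For each player `i`, the process `S` has mean `E[W₀]` at time `0`, and condition (ii) makes its
mean at time `T` equal to the cost `J`. Monotonicity therefore gives `E[W₀] ≤ J i α`, with equality
for `α*`. By (i) this lower bound is blind to the `i`-th control, so a unilateral deviation from
`α*` cannot push the cost below it.
-/

section NashEquilibrium

variable {ι β : Type*} [DecidableEq ι] [Preorder β] {A : ι → Type*}

/-- A profile `α` is a Nash equilibrium for the costs `J` if every player's cost is at most the
one they would incur by deviating unilaterally. The deviation `(αᵢ, α⁻ⁱ)` is encoded as
`Function.update α i αᵢ`. -/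
def IsNashEquilibrium (J : ι → (∀ i, A i) → β) (α : ∀ i, A i) : Prop :=
  ∀ i, ∀ ai : A i, J i α ≤ J i (Function.update α i ai)

theorem IsNashEquilibrium.of_lower_bound {J V : ι → (∀ i, A i) → β} {α : ∀ i, A i}
    (hVJ : ∀ i α', V i α' ≤ J i α') (hJV : ∀ i, J i α ≤ V i α)
    (hV : ∀ i, ∀ ai : A i, V i α ≤ V i (Function.update α i ai)) :
    IsNashEquilibrium J α := fun i ai =>
  calc
    J i α ≤ V i α := hJV i
    _ ≤ V i (Function.update α i ai) := hV i ai
    _ ≤ J i (Function.update α i ai) := hVJ i _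

end NashEquilibrium

theorem integral_add_right_congr {Ω E : Type*} [MeasurableSpace Ω] [NormedAddCommGroup E]
    [NormedSpace ℝ E] {μ : Measure Ω} {f g h : Ω → E} (hf : Integrable f μ) (hg : Integrable g μ)
    (hfh : Integrable (f + h) μ) (hfg : ∫ ω, f ω ∂μ = ∫ ω, g ω ∂μ) :
    ∫ ω, (f + h) ω ∂μ = ∫ ω, (g + h) ω ∂μ := by
  have hh : Integrable h μ := (integrable_add_iff_integrable_right hf).1 hfh
  rw [integral_add' hf hh, integral_add' hg hh, hfg]

section CostProcess

variable {Ω 𝕋 : Type*}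

/-- The process `S_t = D_t W_t + C_t` attached to a candidate value process `W`, where `D` is the
discount factor and `C` the discounted running cost accumulated so far; in the finite-horizon game
`D_t = e^{-ρt}` and `C_t = ∫₀ᵗ e^{-ρu} F_u du`. -/
def costProcess (D : 𝕋 → ℝ) (W C : 𝕋 → Ω → ℝ) (t : 𝕋) (ω : Ω) : ℝ :=
  D t * W t ω + C t ω

variable [MeasurableSpace Ω]

/-- The cost functional `J = E[C + d G]` of a player with accumulated running cost `C`, terminal
cost `G` and terminal discount factor `d`. -/
noncomputable def expectedCost (P : Measure Ω) (d : ℝ) (C G : Ω → ℝ) : ℝ :=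
  ∫ ω, (C ω + d * G ω) ∂P

variable {P : Measure Ω} {D : 𝕋 → ℝ} {W C : 𝕋 → Ω → ℝ} {G : Ω → ℝ} {a b : 𝕋}

theorem integral_costProcess_initial (hD : D a = 1) (hC : ∀ ω, C a ω = 0) :
    ∫ ω, costProcess D W C a ω ∂P = ∫ ω, W a ω ∂P := by
  simp [costProcess, hD, hC]

theorem integral_costProcess_terminal (hW : Integrable (W b) P) (hG : Integrable G P)
    (hS : Integrable (costProcess D W C b) P) (hWG : ∫ ω, W b ω ∂P = ∫ ω, G ω ∂P) :
    ∫ ω, costProcess D W C b ω ∂P = expectedCost P (D b) (C b) G :=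
  calc
    ∫ ω, costProcess D W C b ω ∂P = ∫ ω, (D b * G ω + C b ω) ∂P :=
      integral_add_right_congr (hW.const_mul (D b)) (hG.const_mul (D b)) hS (by
        simp only [integral_const_mul, hWG])
    _ = expectedCost P (D b) (C b) G := by simp only [expectedCost, add_comm]

end CostProcess

theorem finite_horizon_weak_submartingale_optimality_principle_general
    {Ω ι 𝕋 : Type*} [MeasurableSpace Ω] [DecidableEq ι] [Preorder 𝕋] (P : Measure Ω)
    {a b : 𝕋} (hab : a ≤ b) {A : ι → Type*} (αstar : ∀ i, A i) (D : ι → 𝕋 → ℝ)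
    (W C : (∀ i, A i) → ι → 𝕋 → Ω → ℝ) (G : (∀ i, A i) → ι → Ω → ℝ)
    (hD : ∀ i, D i a = 1) (hC : ∀ α i ω, C α i a ω = 0)
    (hWint : ∀ α i, ∀ t ∈ Icc a b, Integrable (W α i t) P)
    (hGint : ∀ α i, Integrable (G α i) P)
    (h_initial : ∀ i, ∀ α α' : ∀ j, A j, (∀ j, j ≠ i → α j = α' j) →
      ∫ ω, W α i a ω ∂P = ∫ ω, W α' i a ω ∂P)
    (h_terminal : ∀ i α, ∫ ω, W α i b ω ∂P = ∫ ω, G α i ω ∂P)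
    (h_mono : ∀ i α,
      (∀ t ∈ Icc a b, Integrable (costProcess (D i) (W α i) (C α i) t) P) ∧
      MonotoneOn (fun t => ∫ ω, costProcess (D i) (W α i) (C α i) t ω ∂P) (Icc a b))
    (h_const : ∀ i, ∀ t ∈ Icc a b,
      ∫ ω, costProcess (D i) (W αstar i) (C αstar i) t ω ∂P =
        ∫ ω, costProcess (D i) (W αstar i) (C αstar i) a ω ∂P) :
    IsNashEquilibrium (fun i α => expectedCost P (D i b) (C α i b) (G α i)) αstar ∧
      ∀ i, expectedCost P (D i b) (C αstar i b) (G αstar i) = ∫ ω, W αstar i a ω ∂P := by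
  have ha : a ∈ Icc a b := left_mem_Icc.2 hab
  have hb : b ∈ Icc a b := right_mem_Icc.2 hab
  have mean_initial i α :
      ∫ ω, costProcess (D i) (W α i) (C α i) a ω ∂P = ∫ ω, W α i a ω ∂P :=
    integral_costProcess_initial (hD i) (hC α i)
  have mean_terminal i α : ∫ ω, costProcess (D i) (W α i) (C α i) b ω ∂P =
      expectedCost P (D i b) (C α i b) (G α i) :=
    integral_costProcess_terminal (hWint α i b hb) (hGint α i) ((h_mono i α).1 b hb)
      (h_terminal i α)
  have lower_bound i α : ∫ ω, W α i a ω ∂P ≤ expectedCost P (D i b) (C α i b) (G α i) := by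
    rw [← mean_initial, ← mean_terminal]
    exact (h_mono i α).2 ha hb hab
  have attained i :
      expectedCost P (D i b) (C αstar i b) (G αstar i) = ∫ ω, W αstar i a ω ∂P := by
    rw [← mean_terminal, h_const i b hb, mean_initial]
  refine ⟨.of_lower_bound lower_bound (fun i => (attained i).le) fun i ai => ?_, attained⟩
  exact (h_initial i _ _ fun j hj => (Function.update_of_ne hj ai αstar).symm).le

/-- Finite-horizon weak submartingale optimality principle (Lemma 2.1, main conclusion). -/
theorem finite_horizon_weak_submartingale_optimality_principle
    {Ω : Type*} [MeasurableSpace Ω] (P : Measure Ω) [IsProbabilityMeasure P]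
    (T ρ : ℝ) (hT : 0 < T) (hρ : 0 ≤ ρ)
    (n : ℕ) (hn : 1 ≤ n)
    (A : Fin n → Type*) (hA : ∀ i, Nonempty (A i))
    (αstar : ∀ i, A i)
    (W F : (∀ i, A i) → Fin n → ℝ → Ω → ℝ)
    (G : (∀ i, A i) → Fin n → Ω → ℝ)
    (hWint : ∀ α i, ∀ t ∈ Icc (0 : ℝ) T, Integrable (W α i t) P)
    (hFmeas : ∀ α i, Measurable (Function.uncurry (F α i)))
    (hFint : ∀ α i,
      IntegrableOn (fun u => Real.exp (-ρ * u) * ∫ ω, |F α i u ω| ∂P) (Icc (0 : ℝ) T))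
    (hGint : ∀ α i, Integrable (G α i) P)
    (S : (∀ i, A i) → Fin n → ℝ → Ω → ℝ)
    (hS : ∀ α i t ω, S α i t ω =
      Real.exp (-ρ * t) * W α i t ω + ∫ u in Icc (0 : ℝ) t, Real.exp (-ρ * u) * F α i u ω)
    (J : Fin n → (∀ i, A i) → ℝ)
    (hJ : ∀ i α, J i α =
      ∫ ω, ((∫ u in Icc (0 : ℝ) T, Real.exp (-ρ * u) * F α i u ω)
        + Real.exp (-ρ * T) * G α i ω) ∂P)
    -- (i) E[W₀^{α,i}] does not depend on the i-th coordinate of α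
    (h1 : ∀ i, ∀ α α' : ∀ j, A j, (∀ j, j ≠ i → α j = α' j) →
      ∫ ω, W α i 0 ω ∂P = ∫ ω, W α' i 0 ω ∂P)
    -- (ii) E[W_T^{α,i}] = E[G^{α,i}]
    (h2 : ∀ i α, ∫ ω, W α i T ω ∂P = ∫ ω, G α i ω ∂P)
    -- (iii) t ↦ E[S_t^{α,i}] is well defined and nondecreasing on [0,T]
    (h3 : ∀ i α, (∀ t ∈ Icc (0 : ℝ) T, Integrable (S α i t) P) ∧
      MonotoneOn (fun t => ∫ ω, S α i t ω ∂P) (Icc (0 : ℝ) T))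
    -- (iv) t ↦ E[S_t^{α*,i}] is constant on [0,T]
    (h4 : ∀ i, ∀ t ∈ Icc (0 : ℝ) T,
      ∫ ω, S αstar i t ω ∂P = ∫ ω, S αstar i 0 ω ∂P) :
    (∀ i, ∀ ai : A i, J i αstar ≤ J i (Function.update αstar i ai)) ∧
    (∀ i, J i αstar = ∫ ω, W αstar i 0 ω ∂P) := by
  obtain rfl : S = _ := funext₃ fun α i t => funext (hS α i t)
  obtain rfl : J = _ := funext₂ hJ
  exact finite_horizon_weak_submartingale_optimality_principle_general P hT.le αstar
    (fun _ t => Real.exp (-ρ * t)) W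
    (fun α i t ω => ∫ u in Icc (0 : ℝ) t, Real.exp (-ρ * u) * F α i u ω) G
    (by simp) (by simp) hWint hGint h1 h2 h3 h4
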